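/- Assume k ≥ 3. In TL_k the following identity holds: (ae_2)T_1T_0T_1T_2 = t^{3/2}(ae_2)T_1^{−1}T_0^{−1}T_1^{−1}. -/

import Mathlib

noncomputable section

open scoped BigOperators

namespace TwoBoundaryTL

variable (k : ℕ) (u u0 uk a a0 ak : ℂ)

/-- The free algebra on generators `T_i`, `i : ℕ` (only `i ≤ k` are used). -/
abbrev FA := FreeAlgebra ℂ ℕ

/-- The `i`-th generator of the free algebra. -/
def g (i : ℕ) : FA := FreeAlgebra.ι ℂ i

/-- Scalars in the free algebra. -/
def cst (z : ℂ) : FA := algebraMap ℂ FA z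

/-- The defining relations of the two-boundary Hecke algebra `H_k`, with parameters
`u = t^{1/2}`, `u0 = t_0^{1/2}`, `uk = t_k^{1/2}`. -/
inductive HeckeRel : FA → FA → Prop
  | quad0 : HeckeRel ((g 0 - cst u0) * (g 0 + cst u0⁻¹)) 0
  | quad (i : ℕ) (h1 : 1 ≤ i) (h2 : i ≤ k - 1) :
      HeckeRel ((g i - cst u) * (g i + cst u⁻¹)) 0
  | quadk : HeckeRel ((g k - cst uk) * (g k + cst uk⁻¹)) 0
  | braid0 : HeckeRel (g 0 * g 1 * g 0 * g 1) (g 1 * g 0 * g 1 * g 0)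
  | braidk : HeckeRel (g (k-1) * g k * g (k-1) * g k) (g k * g (k-1) * g k * g (k-1))
  | braid (i : ℕ) (h1 : 1 ≤ i) (h2 : i ≤ k - 2) :
      HeckeRel (g i * g (i+1) * g i) (g (i+1) * g i * g (i+1))
  | comm (i j : ℕ) (hij : i < j) (hj : j ≤ k) (h : 2 ≤ j - i) :
      HeckeRel (g i * g j) (g j * g i)

/-- The two-boundary Hecke algebra `H_k`. -/
def Hecke := RingQuot (HeckeRel k u u0 uk)

instance : Ring (Hecke k u u0 uk) :=
  inferInstanceAs (Ring (RingQuot (HeckeRel k u u0 uk)))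

instance : Algebra ℂ (Hecke k u u0 uk) :=
  inferInstanceAs (Algebra ℂ (RingQuot (HeckeRel k u u0 uk)))

/-- The generator `T_i` of `H_k`. -/
def T (i : ℕ) : Hecke k u u0 uk := RingQuot.mkAlgHom ℂ (HeckeRel k u u0 uk) (g i)

/-- Scalars in `H_k`. -/
def hc (z : ℂ) : Hecke k u u0 uk := algebraMap ℂ (Hecke k u u0 uk) z

/-- The inverse of `T_i`, given by the explicit formulas
`T_0⁻¹ = T_0 - (t_0^{1/2} - t_0^{-1/2})`, `T_i⁻¹ = T_i - (t^{1/2} - t^{-1/2})`,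
`T_k⁻¹ = T_k - (t_k^{1/2} - t_k^{-1/2})`. -/
def Tinv (i : ℕ) : Hecke k u u0 uk :=
  if i = 0 then T k u u0 uk 0 - hc k u u0 uk (u0 - u0⁻¹)
  else if i = k then T k u u0 uk k - hc k u u0 uk (uk - uk⁻¹)
  else T k u u0 uk i - hc k u u0 uk (u - u⁻¹)

/-- The elements `e_0 = a_0⁻¹(T_0 - t_0^{1/2})`, `e_i = a⁻¹(T_i - t^{1/2})` for `1 ≤ i ≤ k-1`,
`e_k = a_k⁻¹(T_k - t_k^{1/2})`. -/
def e (i : ℕ) : Hecke k u u0 uk :=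
  if i = 0 then a0⁻¹ • (T k u u0 uk 0 - hc k u u0 uk u0)
  else if i = k then ak⁻¹ • (T k u u0 uk k - hc k u u0 uk uk)
  else a⁻¹ • (T k u u0 uk i - hc k u u0 uk u)

/-- `W_1 = T_1⁻¹ T_2⁻¹ ⋯ T_{k-1}⁻¹ T_k T_{k-1} ⋯ T_2 T_1 T_0`. -/
def W1 : Hecke k u u0 uk :=
  ((List.range (k-1)).map (fun j => Tinv k u u0 uk (j+1))).prod *
    T k u u0 uk k *
    ((List.range (k-1)).reverse.map (fun j => T k u u0 uk (j+1))).prod *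
    T k u u0 uk 0

/-- The Murphy elements: `W_j = T_j W_{j-1} T_j` for `2 ≤ j ≤ k`. -/
def W : ℕ → Hecke k u u0 uk
  | 0 => 1
  | 1 => W1 k u u0 uk
  | j + 2 => T k u u0 uk (j + 2) * W (j + 1) * T k u u0 uk (j + 2)

/-- `W_1⁻¹ = T_0⁻¹ T_1⁻¹ ⋯ T_{k-1}⁻¹ T_k⁻¹ T_{k-1} ⋯ T_1`. -/
def W1inv : Hecke k u u0 uk :=
  Tinv k u u0 uk 0 *
    ((List.range (k-1)).map (fun j => Tinv k u u0 uk (j+1))).prod *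
    Tinv k u u0 uk k *
    ((List.range (k-1)).reverse.map (fun j => T k u u0 uk (j+1))).prod

/-- The inverses of the Murphy elements. -/
def Winv : ℕ → Hecke k u u0 uk
  | 0 => 1
  | 1 => W1inv k u u0 uk
  | j + 2 => Tinv k u u0 uk (j + 2) * Winv (j + 1) * Tinv k u u0 uk (j + 2)

/-- The central element `Z = W_1 + W_1⁻¹ + ⋯ + W_k + W_k⁻¹`. -/
def Z : Hecke k u u0 uk :=
  ∑ j ∈ Finset.range k, (W k u u0 uk (j + 1) + Winv k u u0 uk (j + 1))

/-- The relations defining the two-boundary Temperley–Lieb algebra as a quotient of `H_k`. -/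
inductive TLRel : Hecke k u u0 uk → Hecke k u u0 uk → Prop
  | braidA (i : ℕ) (h1 : 1 ≤ i) (h2 : i ≤ k - 2) :
      TLRel ((a ^ 3) • (e k u u0 uk a a0 ak i * e k u u0 uk a a0 ak (i+1) * e k u u0 uk a a0 ak i)
        - a • e k u u0 uk a a0 ak i) 0
  | braidB (i : ℕ) (h1 : 1 ≤ i) (h2 : i ≤ k - 2) :
      TLRel ((a ^ 3) • (e k u u0 uk a a0 ak (i+1) * e k u u0 uk a a0 ak i * e k u u0 uk a a0 ak (i+1))
        - a • e k u u0 uk a a0 ak (i+1)) 0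
  | bd0 :
      TLRel ((a0 * a ^ 2) • (e k u u0 uk a a0 ak 1 * e k u u0 uk a a0 ak 0 * e k u u0 uk a a0 ak 1)
        - (a * (u0⁻¹ * u + u0 * u⁻¹)) • e k u u0 uk a a0 ak 1) 0
  | bdk :
      TLRel ((ak * a ^ 2) • (e k u u0 uk a a0 ak (k-1) * e k u u0 uk a a0 ak k * e k u u0 uk a a0 ak (k-1))
        - (a * (uk⁻¹ * u + uk * u⁻¹)) • e k u u0 uk a a0 ak (k-1)) 0

/-- The two-boundary Temperley–Lieb algebra `TL_k`. -/
def TL := RingQuot (TLRel k u u0 uk a a0 ak)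

instance : Ring (TL k u u0 uk a a0 ak) :=
  inferInstanceAs (Ring (RingQuot (TLRel k u u0 uk a a0 ak)))

instance : Algebra ℂ (TL k u u0 uk a a0 ak) :=
  inferInstanceAs (Algebra ℂ (RingQuot (TLRel k u u0 uk a a0 ak)))

/-- The quotient map `H_k → TL_k`. -/
def π : Hecke k u u0 uk →ₐ[ℂ] TL k u u0 uk a a0 ak :=
  RingQuot.mkAlgHom ℂ (TLRel k u u0 uk a a0 ak)

/-- `I_1 = (ae_1)(ae_3)⋯(ae_{k-1})` for `k` even, `(ae_1)(ae_3)⋯(ae_{k-2})e_k` for `k` odd. -/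
def I1 : Hecke k u u0 uk :=
  if k % 2 = 0 then
    ((List.range (k / 2)).map (fun j => a • e k u u0 uk a a0 ak (2*j+1))).prod
  else
    ((List.range ((k-1) / 2)).map (fun j => a • e k u u0 uk a a0 ak (2*j+1))).prod *
      e k u u0 uk a a0 ak k

/-- `I_2 = e_0(ae_2)(ae_4)⋯(ae_{k-2})e_k` for `k` even, `e_0(ae_2)(ae_4)⋯(ae_{k-1})` for `k` odd. -/
def I2 : Hecke k u u0 uk :=
  if k % 2 = 0 then
    e k u u0 uk a a0 ak 0 *
      ((List.range (k / 2 - 1)).map (fun j => a • e k u u0 uk a a0 ak (2*j+2))).prod *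
      e k u u0 uk a a0 ak k
  else
    e k u u0 uk a a0 ak 0 *
      ((List.range ((k-1) / 2)).map (fun j => a • e k u u0 uk a a0 ak (2*j+2))).prod

/-- The quantum integer `[k] = (t^{1/2})^{-(k-1)}(1 + t + ⋯ + t^{k-1})`. -/
def qk : ℂ := (u⁻¹) ^ (k - 1) * ∑ j ∈ Finset.range k, (u ^ 2) ^ j


theorem aux_flip {A : Type*} [Ring A] [Algebra ℂ A] (u u0 : ℂ) (hu : u ≠ 0) (hu0 : u0 ≠ 0)
    (E0 E1 E2 : A)
    (h11 : E1 * E1 = (-(u + u⁻¹)) • E1) (h22 : E2 * E2 = (-(u + u⁻¹)) • E2)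
    (h212 : E2 * E1 * E2 = E2) (h101 : E1 * E0 * E1 = (u0⁻¹ * u + u0 * u⁻¹) • E1)
    (h02 : E0 * E2 = E2 * E0) :
    E2 * (E1 + u • (1:A)) * (E0 + u0 • (1:A)) * (E1 + u • (1:A)) * (E2 + u • (1:A))
      = u ^ 3 • (E2 * (E1 + u⁻¹ • (1:A)) * (E0 + u0⁻¹ • (1:A)) * (E1 + u⁻¹ • (1:A))) := by
  have r1 : E2 * (E1 * E2) = E2 := by rw [← mul_assoc, h212]
  have r2 : E1 * (E0 * E1) = (u0⁻¹ * u + u0 * u⁻¹) • E1 := by rw [← mul_assoc, h101]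
  have r3 : E2 * (E1 * (E2 * E0)) = E2 * E0 := by
    rw [← mul_assoc, ← mul_assoc, h212]
  have r4 : E2 * (E2 * E0) = (-(u + u⁻¹)) • (E2 * E0) := by
    rw [← mul_assoc, h22, smul_mul_assoc]
  have r5 : E2 * (E0 * (E1 * E2)) = E2 * E0 := by
    rw [← mul_assoc, ← h02, mul_assoc, r1]
  have r6 : E1 * (E0 * (E1 * E2)) = (u0⁻¹ * u + u0 * u⁻¹) • (E1 * E2) := by
    rw [← mul_assoc, ← mul_assoc, h101, smul_mul_assoc]
  have r7 : E1 * (E1 * E2) = (-(u + u⁻¹)) • (E1 * E2) := by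
    rw [← mul_assoc, h11, smul_mul_assoc]
  simp only [mul_add, add_mul, smul_mul_assoc, mul_smul_comm, mul_one, one_mul, mul_assoc,
    smul_add, smul_smul, h11, h22, h02, r1, r2, r3, r4, r5, r6, r7]
  match_scalars <;> field_simp <;> ring

theorem T_quad (k : ℕ) (u u0 uk : ℂ) (i : ℕ) (h1 : 1 ≤ i) (h2 : i ≤ k - 1) :
    (T k u u0 uk i - hc k u u0 uk u) * (T k u u0 uk i + hc k u u0 uk u⁻¹) = 0 := by
  have h := RingQuot.mkAlgHom_rel ℂ (HeckeRel.quad (k := k) (u := u) (u0 := u0) (uk := uk) i h1 h2)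
  simp only [map_mul, map_sub, map_add, map_zero, cst, AlgHom.commutes] at h
  exact h

theorem T_comm (k : ℕ) (hk : 2 ≤ k) (u u0 uk : ℂ) :
    T k u u0 uk 0 * T k u u0 uk 2 = T k u u0 uk 2 * T k u u0 uk 0 := by
  have h := RingQuot.mkAlgHom_rel ℂ (HeckeRel.comm (k := k) (u := u) (u0 := u0) (uk := uk) 0 2
    (by norm_num) hk (by norm_num))
  simp only [map_mul] at h
  exact h

/-- the odd left pole flip identity in `TL_k`. -/
theorem statement14 (k : ℕ) (hk : 3 ≤ k) (u u0 uk a a0 ak : ℂ)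
    (hu : u ≠ 0) (hu0 : u0 ≠ 0) (huk : uk ≠ 0) (ha : a ≠ 0) (ha0 : a0 ≠ 0) (hak : ak ≠ 0) :
    π k u u0 uk a a0 ak ((a • e k u u0 uk a a0 ak 2) * T k u u0 uk 1 * T k u u0 uk 0 *
        T k u u0 uk 1 * T k u u0 uk 2)
      = (u ^ 3) • π k u u0 uk a a0 ak ((a • e k u u0 uk a a0 ak 2) * Tinv k u u0 uk 1 *
          Tinv k u u0 uk 0 * Tinv k u u0 uk 1) := by
  have q1 := T_quad k u u0 uk 1 (by omega) (by omega)
  have q2 := T_quad k u u0 uk 2 (by omega) (by omega)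
  have cm := T_comm k (by omega) u u0 uk
  have hB : π k u u0 uk a a0 ak _ = π k u u0 uk a a0 ak _ := RingQuot.mkAlgHom_rel ℂ
    (TLRel.braidB (k := k) (u := u) (u0 := u0) (uk := uk) (a := a) (a0 := a0) (ak := ak) 1
      (by omega) (by omega))
  have h0 : π k u u0 uk a a0 ak _ = π k u u0 uk a a0 ak _ := RingQuot.mkAlgHom_rel ℂ
    (TLRel.bd0 (k := k) (u := u) (u0 := u0) (uk := uk) (a := a) (a0 := a0) (ak := ak))
  have k1 : (1:ℕ) ≠ k := by omega
  have k2 : (2:ℕ) ≠ k := by omega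
  have q1' := congrArg (π k u u0 uk a a0 ak) q1
  have q2' := congrArg (π k u u0 uk a a0 ak) q2
  have cm' := congrArg (π k u u0 uk a a0 ak) cm
  simp only [e, Tinv, hc, k1, k2, if_false, if_true, one_ne_zero, two_ne_zero, map_mul, map_sub,
    map_add, map_smul, map_zero, AlgHom.commutes, Algebra.algebraMap_eq_smul_one,
    Nat.reduceAdd, smul_smul, mul_inv_cancel₀ ha, one_smul, map_one] at q1' q2' cm' hB h0 ⊢
  generalize π k u u0 uk a a0 ak (T k u u0 uk 0) = x0 at *
  generalize π k u u0 uk a a0 ak (T k u u0 uk 1) = x1 at *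
  generalize π k u u0 uk a a0 ak (T k u u0 uk 2) = x2 at *
  obtain ⟨E0, rfl⟩ : ∃ E0, x0 = E0 + u0 • 1 := ⟨x0 - u0 • 1, by abel⟩
  obtain ⟨E1, rfl⟩ : ∃ E1, x1 = E1 + u • 1 := ⟨x1 - u • 1, by abel⟩
  obtain ⟨E2, rfl⟩ : ∃ E2, x2 = E2 + u • 1 := ⟨x2 - u • 1, by abel⟩
  simp only [add_sub_cancel_right] at *
  have key := aux_flip u u0 hu hu0 E0 E1 E2 ?_ ?_ ?_ ?_ ?_
  · convert key using 3
    · congr 1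
      · congr 1
        module
      · module
    · module
  · simp only [mul_add, mul_smul_comm, mul_one] at q1'
    rw [← sub_eq_zero, ← q1']
    module
  · simp only [mul_add, mul_smul_comm, mul_one] at q2'
    rw [← sub_eq_zero, ← q2']
    module
  · rw [sub_eq_zero] at hB
    simp only [smul_mul_assoc, mul_smul_comm, smul_smul] at hB
    rw [show a ^ 3 * (a⁻¹ * (a⁻¹ * a⁻¹)) = 1 by field_simp, one_smul] at hB
    exact hB
  · rw [sub_eq_zero] at h0
    simp only [smul_mul_assoc, mul_smul_comm, smul_smul] at h0
    rw [show a0 * a ^ 2 * (a⁻¹ * (a0⁻¹ * a⁻¹)) = 1 by field_simp, one_smul] at h0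
    rw [h0]
    congr 1
    field_simp
  · simp only [mul_add, add_mul, mul_smul_comm, smul_mul_assoc, mul_one, one_mul] at cm'
    have : E0 * E2 - E2 * E0 = 0 := by
      have := sub_eq_zero.2 cm'
      rw [← this]
      module
    exact sub_eq_zero.1 this

end TwoBoundaryTL
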